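/- arXiv:2209.04058 — 3 statements merged into one kernel-verified Lean document; each statement's English description precedes it below -/
import Mathlib

section
/- The mechanism SimpleScaledGreedy is 2α-consistent: if it is run on an instance p and predicted instance p̂ with p̂ = p, using a predicted schedule x̂ satisfying MS(p̂, x̂) ≤ α·OPT(p̂) for some α ≥ 1, then the allocation x it outputs satisfies MS(p, x) ≤ 2α·OPT(p). -/
open scoped Classical
noncomputable section
variable {n m : ℕ}

/-- The makespan of allocation `a` under instance `p`. -/
def MS [NeZero n] (p : Fin n → Fin m → ℝ) (a : Fin m → Fin n) : ℝ :=
  Finset.univ.sup' Finset.univ_nonempty fun i => ∑ j, if a j = i then p i j else 0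

/-- The optimal makespan of instance `p`. -/
def OPT [NeZero n] (p : Fin n → Fin m → ℝ) : ℝ :=
  Finset.univ.inf' Finset.univ_nonempty fun a : Fin m → Fin n => MS p a

/-- The scalars used by `SimpleScaledGreedy`. -/
def ssgR (phat : Fin n → Fin m → ℝ) (xhat : Fin m → Fin n) (i : Fin n) (j : Fin m) : ℝ :=
  max 1 (min (phat (xhat j) j / phat i j) (n : ℝ))

lemma exists_argmin [NeZero n] (v : Fin n → ℝ) :
    (Finset.univ.filter fun i => ∀ i', v i ≤ v i').Nonempty := by
  obtain ⟨i, -, hi⟩ := Finset.exists_min_image Finset.univ v Finset.univ_nonempty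
  exact ⟨i, by
    simp only [Finset.mem_filter, Finset.mem_univ, true_and]
    exact fun i' => hi i' (Finset.mem_univ i')⟩

/-- The allocation computed by `SimpleScaledGreedy`: job `j` goes to a machine minimizing
`r(i,j)·p(i,j)`, with ties broken in favor of the predicted machine `x̂ j` and otherwise
in favor of the smallest-index machine. -/
def ssgAssign [NeZero n] (p phat : Fin n → Fin m → ℝ) (xhat : Fin m → Fin n) (j : Fin m) :
    Fin n :=
  let v : Fin n → ℝ := fun i => ssgR phat xhat i j * p i j
  if ∀ i, v (xhat j) ≤ v i then xhat j
  else (Finset.univ.filter fun i => ∀ i', v i ≤ v i').min' (exists_argmin v)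
lemma ssg_key [NeZero n] (p : Fin n → Fin m → ℝ) (xhat : Fin m → Fin n)
    (hp : ∀ i j, 0 < p i j) (j : Fin m) :
    ssgAssign p p xhat j = xhat j ∨
      (n : ℝ) * p (ssgAssign p p xhat j) j ≤ p (xhat j) j := by
  have hn : (1 : ℝ) ≤ n := by exact_mod_cast NeZero.one_le
  by_cases h : ∀ i, ssgR p xhat (xhat j) j * p (xhat j) j ≤ ssgR p xhat i j * p i j
  · left
    simp only [ssgAssign]
    rw [if_pos h]
  · right
    have hmem := Finset.min'_mem _ (exists_argmin fun i => ssgR p xhat i j * p i j)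
    have he : ssgAssign p p xhat j = (Finset.univ.filter fun i => ∀ i',
        (fun i => ssgR p xhat i j * p i j) i ≤ (fun i => ssgR p xhat i j * p i j) i').min'
        (exists_argmin fun i => ssgR p xhat i j * p i j) := by
      simp only [ssgAssign]
      rw [if_neg h]
    rw [← he] at hmem
    generalize ssgAssign p p xhat j = a at hmem
    simp only [Finset.mem_filter, Finset.mem_univ, true_and] at hmem
    push Not at h
    obtain ⟨i, hi⟩ := h
    have h1 := lt_of_le_of_lt (hmem i) hi
    have h2 : ssgR p xhat (xhat j) j = 1 := by
      unfold ssgR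
      rw [div_self (hp _ _).ne', min_eq_left hn, max_self]
    rw [h2, one_mul] at h1
    have h3 : min (p (xhat j) j / p a j) (n : ℝ) * p a j ≤ ssgR p xhat a j * p a j :=
      mul_le_mul_of_nonneg_right (le_max_right _ _) (hp a j).le
    rcases le_total (p (xhat j) j / p a j) (n : ℝ) with h4 | h4
    · rw [min_eq_left h4, div_mul_cancel₀ _ (hp a j).ne'] at h3
      linarith
    · rw [min_eq_right h4] at h3
      linarith

/-- `SimpleScaledGreedy` is `2α`-consistent: when `p̂ = p` and the predicted
schedule satisfies `MS(p̂,x̂) ≤ α·OPT(p̂)`, the output allocation has makespan at most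
`2α·OPT(p)`. -/
theorem ssg_consistency [NeZero n]
    (p phat : Fin n → Fin m → ℝ) (xhat : Fin m → Fin n) (α : ℝ)
    (hp : ∀ i j, 0 < p i j) (hphat : ∀ i j, 0 < phat i j)
    (hα : 1 ≤ α) (hMS : MS phat xhat ≤ α * OPT phat)
    (hpred : phat = p) :
    MS p (ssgAssign p phat xhat) ≤ 2 * α * OPT p := by
  subst hpred
  have hn : (1 : ℝ) ≤ n := by exact_mod_cast NeZero.one_le
  have hload : ∀ i, (∑ j, if xhat j = i then phat i j else 0) ≤ MS phat xhat := fun i =>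
    Finset.le_sup' (fun i => ∑ j, if xhat j = i then phat i j else 0) (Finset.mem_univ i)
  have htot : ∑ j, phat (xhat j) j ≤ n * MS phat xhat := by
    calc ∑ j, phat (xhat j) j = ∑ j, ∑ i, (if xhat j = i then phat i j else 0) := by simp
      _ = ∑ i, ∑ j, (if xhat j = i then phat i j else 0) := Finset.sum_comm
      _ ≤ ∑ _i : Fin n, MS phat xhat := Finset.sum_le_sum fun i _ => hload i
      _ = n * MS phat xhat := by simp
  have hmain : MS phat (ssgAssign phat phat xhat) ≤ 2 * MS phat xhat := by
    conv_lhs => unfold MS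
    refine Finset.sup'_le _ _ fun i _ => ?_
    have hs : (∑ j, if ssgAssign phat phat xhat j = i then phat i j else 0) ≤
        ∑ j, ((if xhat j = i then phat i j else 0) + phat (xhat j) j / n) := by
      refine Finset.sum_le_sum fun j _ => ?_
      have hq : 0 ≤ phat (xhat j) j / n := div_nonneg (hp _ _).le (by linarith)
      have h0 : 0 ≤ (if xhat j = i then phat i j else 0) := by
        split_ifs
        · exact (hp _ _).le
        · exact le_rfl
      by_cases hi : ssgAssign phat phat xhat j = i
      · rw [if_pos hi]
        rcases ssg_key phat xhat hp j with h | h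
        · rw [if_pos (h.symm.trans hi)]
          linarith
        · rw [hi] at h
          have : phat i j ≤ phat (xhat j) j / n := by
            rw [le_div_iff₀ (by linarith)]
            linarith
          linarith
      · rw [if_neg hi]
        linarith
    rw [Finset.sum_add_distrib, ← Finset.sum_div] at hs
    have h5 : (∑ j, phat (xhat j) j) / n ≤ MS phat xhat := by
      rw [div_le_iff₀ (by linarith)]
      linarith
    have := hload i
    linarith
  linarith
end
end

section
/- Consider the mechanism ScaledGreedy and let r and the sets J_i denote the scalars and sets at termination. For any machine i, any job j ∈ J_i, and any job j' ∉ J_i with r(i,j') > 1, it holds that p̂(î_j,j)/p̂(i,j) ≥ p̂(î_{j'},j')/p̂(i,j'). -/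
open scoped Classical
noncomputable section
variable {n m : ℕ}

/-- The state of the iterative loop of `ScaledGreedy`: the sets `J_i` and the scalars `r(i,j)`. -/
structure SGState (n m : ℕ) where
  J : Fin n → Finset (Fin m)
  r : Fin n → Fin m → ℝ

/-- The set `∪_i J_i` of jobs already put aside by the loop. -/
def sgAssigned (s : SGState n m) : Finset (Fin m) :=
  Finset.univ.filter fun j => ∃ i, j ∈ s.J i

/-- The set `I` of machines whose set `J_i` is not yet full. -/
def sgI [NeZero n] (phat : Fin n → Fin m → ℝ) (xhat : Fin m → Fin n) (γ : ℝ)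
    (s : SGState n m) : Finset (Fin n) :=
  Finset.univ.filter fun i => ∑ j ∈ s.J i, phat i j < γ * MS phat xhat

/-- The set `T` of candidate pairs `(i,j)`. -/
def sgT [NeZero n] (phat : Fin n → Fin m → ℝ) (xhat : Fin m → Fin n) (γ : ℝ)
    (s : SGState n m) : Finset (Fin n × Fin m) :=
  Finset.univ.filter fun q =>
    q.2 ∉ sgAssigned s ∧ q.1 ∈ sgI phat xhat γ s ∧
    phat q.1 q.2 < phat (xhat q.2) q.2 ∧
    ∀ i' ∈ sgI phat xhat γ s, phat i' q.2 < phat (xhat q.2) q.2 → phat q.1 q.2 ≤ phat i' q.2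

/-- The initial state of `ScaledGreedy`: `J_i = ∅` and `r(i,j) = max(p̂(î_j,j)/p̂(i,j), 1)`. -/
def sgInit (phat : Fin n → Fin m → ℝ) (xhat : Fin m → Fin n) : SGState n m :=
  ⟨fun _ => ∅, fun i j => max (phat (xhat j) j / phat i j) 1⟩

/-- One iteration of the while-loop of `ScaledGreedy`: a pair `(i*,j*) ∈ T` maximizing
`p̂(î_j,j)/p̂(i,j)` is selected, `j*` is added to `J_{i*}`, and `r(i,j*)` is set to `1` for
every machine `i` with `p̂(i*,j*) ≤ p̂(i,j*)`. -/
def SGStep [NeZero n] (phat : Fin n → Fin m → ℝ) (xhat : Fin m → Fin n) (γ : ℝ)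
    (s s' : SGState n m) : Prop :=
  ∃ q ∈ sgT phat xhat γ s,
    (∀ q' ∈ sgT phat xhat γ s,
      phat (xhat q'.2) q'.2 / phat q'.1 q'.2 ≤ phat (xhat q.2) q.2 / phat q.1 q.2) ∧
    s'.J = (fun i => if i = q.1 then insert q.2 (s.J i) else s.J i) ∧
    s'.r = fun i j => if j = q.2 ∧ phat q.1 q.2 ≤ phat i q.2 then 1 else s.r i j

/-- `s` is the state of `ScaledGreedy` at termination: it is reachable from the initial state
by iterations of the loop, and `T = ∅` so the loop has terminated. -/
def SGFinal [NeZero n] (phat : Fin n → Fin m → ℝ) (xhat : Fin m → Fin n) (γ : ℝ)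
    (s : SGState n m) : Prop :=
  Relation.ReflTransGen (SGStep phat xhat γ) (sgInit phat xhat) s ∧ sgT phat xhat γ s = ∅

/-- The allocation computed by `ScaledGreedy` from the terminal state `s`: each job `j` goes to
a machine minimizing `r(i,j)·p(i,j)`, with ties broken in favor of `î_j` first, then the machine
`i'` with `j ∈ J_{i'}` (if any), then the smallest-index machine. -/
def sgAssign [NeZero n] (s : SGState n m) (xhat : Fin m → Fin n)
    (p : Fin n → Fin m → ℝ) (j : Fin m) : Fin n :=
  let v : Fin n → ℝ := fun i => s.r i j * p i j
  if ∀ i, v (xhat j) ≤ v i then xhat j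
  else if h : ∃ i', j ∈ s.J i' ∧ ∀ i, v i' ≤ v i then Classical.choose h
  else (Finset.univ.filter fun i => ∀ i', v i ≤ v i').min' (exists_argmin v)

/-- `max_j r(i,j)`, the largest scalar of machine `i`. -/
def maxScalar [NeZero m] (r : Fin n → Fin m → ℝ) (i : Fin n) : ℝ :=
  Finset.univ.sup' Finset.univ_nonempty fun j => r i j
lemma sg_inv [NeZero n]
    (phat : Fin n → Fin m → ℝ) (xhat : Fin m → Fin n) (γ : ℝ) (s : SGState n m)
    (hphat : ∀ i j, 0 < phat i j)
    (h : Relation.ReflTransGen (SGStep phat xhat γ) (sgInit phat xhat) s) :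
    (∀ i j, 1 < s.r i j → phat i j < phat (xhat j) j) ∧
    (∀ i k j, i ∈ sgI phat xhat γ s → j ∈ s.J k → ¬ 1 < s.r i j) ∧
    (∀ i j j', j ∈ s.J i → j' ∉ s.J i → 1 < s.r i j' →
      phat (xhat j') j' / phat i j' ≤ phat (xhat j) j / phat i j) := by
  induction h with
  | refl =>
    refine ⟨?_, ?_, ?_⟩
    · intro i j h
      simp only [sgInit, lt_max_iff, lt_irrefl, or_false] at h
      exact (one_lt_div (hphat i j)).1 h
    · intro i k j _ h
      simp [sgInit] at h
    · intro i j j' h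
      simp [sgInit] at h
  | @tail a b _ hstep ih =>
    obtain ⟨A, B, C⟩ := ih
    obtain ⟨⟨i0, j0⟩, hq, hmax, hJ, hr⟩ := hstep
    simp only at hmax hJ hr
    have hq' := hq
    simp only [sgT, Finset.mem_filter, Finset.mem_univ, true_and] at hq'
    obtain ⟨hq1, hq2, hq3, hq4⟩ := hq'
    have hrr : ∀ i j, 1 < b.r i j → 1 < a.r i j ∧ ¬ (j = j0 ∧ phat i0 j0 ≤ phat i j0) := by
      intro i j h
      rw [hr] at h
      by_cases hc : j = j0 ∧ phat i0 j0 ≤ phat i j0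
      · simp [hc] at h
      · simp only [hc, if_false] at h
        exact ⟨h, hc⟩
    have hsub : ∀ i, a.J i ⊆ b.J i := by
      intro i
      rw [hJ]
      dsimp only
      split_ifs
      · exact Finset.subset_insert _ _
      · exact Finset.Subset.refl _
    have hI : ∀ i, i ∈ sgI phat xhat γ b → i ∈ sgI phat xhat γ a := by
      intro i hi
      simp only [sgI, Finset.mem_filter, Finset.mem_univ, true_and] at hi ⊢
      exact lt_of_le_of_lt
        (Finset.sum_le_sum_of_subset_of_nonneg (hsub i) fun j _ _ => (hphat i j).le) hi
    have hmem : ∀ i j, j ∈ b.J i → j ∈ a.J i ∨ (i = i0 ∧ j = j0) := by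
      intro i j h
      rw [hJ] at h
      by_cases hc : i = i0
      · simp only [hc, if_true, Finset.mem_insert] at h
        rcases h with h | h
        · exact Or.inr ⟨hc, h⟩
        · exact Or.inl (hc ▸ h)
      · simp only [hc, if_false] at h
        exact Or.inl h
    refine ⟨fun i j h => A i j (hrr i j h).1, ?_, ?_⟩
    · intro i k j hi hj h
      obtain ⟨h1, h2⟩ := hrr i j h
      rcases hmem k j hj with h3 | ⟨-, rfl⟩
      · exact B i k j (hI i hi) h3 h1
      · exact h2 ⟨rfl, hq4 i (hI i hi) (A i j h1)⟩
    · intro i j j' hj hj' h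
      obtain ⟨h1, -⟩ := hrr i j' h
      have hj'a : j' ∉ a.J i := fun hh => hj' (hsub i hh)
      rcases hmem i j hj with h3 | ⟨rfl, rfl⟩
      · exact C i j j' h3 hj'a h1
      · obtain ⟨k, hk, hkmin⟩ := Finset.exists_min_image
          ((sgI phat xhat γ a).filter fun k => phat k j' < phat (xhat j') j')
          (fun k => phat k j') ⟨i, Finset.mem_filter.2 ⟨hq2, A i j' h1⟩⟩
        obtain ⟨hk1, hk2⟩ := Finset.mem_filter.1 hk
        have hT : (k, j') ∈ sgT phat xhat γ a := by
          simp only [sgT, Finset.mem_filter, Finset.mem_univ, true_and]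
          refine ⟨?_, hk1, hk2, fun i' hi' hl => hkmin i' (Finset.mem_filter.2 ⟨hi', hl⟩)⟩
          simp only [sgAssigned, Finset.mem_filter, Finset.mem_univ, true_and]
          rintro ⟨l, hl⟩
          exact B i l j' hq2 hl h1
        refine le_trans ?_ (hmax _ hT)
        exact div_le_div_of_nonneg_left (hphat _ _).le (hphat _ _)
          (hkmin i (Finset.mem_filter.2 ⟨hq2, A i j' h1⟩))

/-- At termination of `ScaledGreedy`, for any machine `i`, any job `j ∈ J_i`
and any job `j' ∉ J_i` with `r(i,j') > 1`, we have
`p̂(î_j,j)/p̂(i,j) ≥ p̂(î_{j'},j')/p̂(i,j')`. -/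
theorem sg_decreasing_ratio [NeZero n]
    (phat : Fin n → Fin m → ℝ) (xhat : Fin m → Fin n) (γ : ℝ) (s : SGState n m)
    (hphat : ∀ i j, 0 < phat i j) (hγ : 0 < γ)
    (hfinal : SGFinal phat xhat γ s) (i : Fin n) (j j' : Fin m)
    (hj : j ∈ s.J i) (hj' : j' ∉ s.J i) (hr : 1 < s.r i j') :
    phat (xhat j') j' / phat i j' ≤ phat (xhat j) j / phat i j := by
  exact (sg_inv phat xhat γ s hphat hfinal.1).2.2 i j j' hj hj' hr
end
end

section
/- For any parameter γ ∈ (0, n/2 − 1) and any α-approximate predicted schedule x̂ (i.e., MS(p̂, x̂) ≤ α·OPT(p̂)), the mechanism ScaledGreedy is monotone (hence strategyproof), is (2+γ)α-consistent (if p̂ = p then its output x satisfies MS(p, x) ≤ (2+γ)·α·OPT(p)), and is (1 + 1/γ)n-robust (for every p and p̂ its output x satisfies MS(p, x) ≤ (1 + 1/γ)·n·OPT(p)). -/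
open scoped Classical
noncomputable section
variable {n m : ℕ}

/-- An allocation rule is monotone if, for every machine `i` and every two instances agreeing
outside machine `i`, the inner product of the change in `i`'s allocation with the change in
`i`'s processing times is nonpositive. -/
def MonotoneAlloc {n m : ℕ} (A : (Fin n → Fin m → ℝ) → (Fin m → Fin n)) : Prop :=
  ∀ (i : Fin n) (p p' : Fin n → Fin m → ℝ),
    (∀ i' j, 0 < p i' j) → (∀ i' j, 0 < p' i' j) →
    (∀ i' j, i' ≠ i → p i' j = p' i' j) →
    ∑ j, ((if A p j = i then (1 : ℝ) else 0) - (if A p' j = i then (1 : ℝ) else 0)) *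
      (p i j - p' i j) ≤ 0

structure SGInv [NeZero n] (phat : Fin n → Fin m → ℝ) (xhat : Fin m → Fin n) (γ : ℝ)
    (s : SGState n m) : Prop where
  A : ∀ j i i', j ∈ s.J i → j ∈ s.J i' → i = i'
  B : ∀ i j, j ∈ s.J i → phat i j < phat (xhat j) j
  C : ∀ j, (∀ i, j ∉ s.J i) → ∀ i, s.r i j = max (phat (xhat j) j / phat i j) 1
  D : ∀ j i0, j ∈ s.J i0 → ∀ i,
    s.r i j = if phat i0 j ≤ phat i j then 1 else max (phat (xhat j) j / phat i j) 1
  E : ∀ i, ∑ j ∈ s.J i, phat i j ≤ (γ + 1) * MS phat xhat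
  G : ∀ i0 j i, j ∈ s.J i0 → phat i j < phat i0 j → γ * MS phat xhat ≤ ∑ j ∈ s.J i, phat i j
  F : ∀ i j k, k ∈ s.J i → phat i j < phat (xhat j) j →
    ((∀ i0, j ∉ s.J i0) ∨ ∃ i0, j ∈ s.J i0 ∧ phat i j < phat i0 j) →
    phat (xhat j) j / phat i j ≤ phat (xhat k) k / phat i k

lemma load_le_MS [NeZero n] (p : Fin n → Fin m → ℝ) (a : Fin m → Fin n) (i : Fin n) :
    (∑ j, if a j = i then p i j else 0) ≤ MS p a :=
  Finset.le_sup' (fun i => ∑ j, if a j = i then p i j else 0) (Finset.mem_univ i)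

lemma job_le_MS [NeZero n] (p : Fin n → Fin m → ℝ) (hp : ∀ i j, 0 < p i j)
    (a : Fin m → Fin n) (j : Fin m) : p (a j) j ≤ MS p a := by
  refine le_trans ?_ (load_le_MS p a (a j))
  have := Finset.single_le_sum (f := fun k => if a k = a j then p (a j) k else 0)
    (fun k _ => by split_ifs; exacts [(hp _ _).le, le_rfl]) (Finset.mem_univ j)
  simpa using this

lemma total_le_MS [NeZero n] (p : Fin n → Fin m → ℝ) (a : Fin m → Fin n) :
    ∑ j, p (a j) j ≤ n * MS p a := by
  have h : ∑ i : Fin n, (∑ j, if a j = i then p i j else 0) ≤ ∑ _i : Fin n, MS p a :=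
    Finset.sum_le_sum fun i _ => load_le_MS p a i
  rw [Finset.sum_comm] at h
  simpa using h

lemma exists_T [NeZero n] (phat : Fin n → Fin m → ℝ) (xhat : Fin m → Fin n) (γ : ℝ)
    (s : SGState n m) (i : Fin n) (j : Fin m) (hi : i ∈ sgI phat xhat γ s)
    (hj : ∀ i, j ∉ s.J i) (hlt : phat i j < phat (xhat j) j) :
    ∃ i', (i', j) ∈ sgT phat xhat γ s ∧ phat i' j ≤ phat i j := by
  obtain ⟨i', hi', hmin⟩ := Finset.exists_min_image
    ((sgI phat xhat γ s).filter fun i' => phat i' j < phat (xhat j) j) (fun i' => phat i' j)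
    ⟨i, by simp [hi, hlt]⟩
  simp only [Finset.mem_filter] at hi' hmin
  refine ⟨i', ?_, hmin i ⟨hi, hlt⟩⟩
  simp only [sgT, Finset.mem_filter, Finset.mem_univ, true_and, sgAssigned]
  exact ⟨by simpa using hj, hi'.1, hi'.2, fun k hk hk' => hmin k ⟨hk, hk'⟩⟩

lemma inv_step [NeZero n] (phat : Fin n → Fin m → ℝ) (xhat : Fin m → Fin n) (γ : ℝ)
    (hphat : ∀ i j, 0 < phat i j) (s s' : SGState n m)
    (hI : SGInv phat xhat γ s) (hs : SGStep phat xhat γ s s') : SGInv phat xhat γ s' := by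
  obtain ⟨⟨a, b⟩, hq, hmax, hJ, hr⟩ := hs
  dsimp only at hJ hr hmax
  have hT := hq
  simp only [sgT, Finset.mem_filter, Finset.mem_univ, true_and, sgAssigned, not_exists] at hq
  obtain ⟨hnb, haI, hab, hmin⟩ := hq
  have mem : ∀ i j, j ∈ s'.J i ↔ j ∈ s.J i ∨ (i = a ∧ j = b) := by
    intro i j
    rw [hJ]; dsimp only
    split_ifs with h
    · simp [h, or_comm]
    · simp [h]
  have haS : ∑ j ∈ s.J a, phat a j < γ * MS phat xhat := by
    simpa [sgI] using haI
  have hmono : ∀ i, ∑ j ∈ s.J i, phat i j ≤ ∑ j ∈ s'.J i, phat i j := fun i =>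
    Finset.sum_le_sum_of_subset_of_nonneg (fun j hj => (mem i j).2 (Or.inl hj))
      (fun j _ _ => (hphat i j).le)
  refine ⟨?_, ?_, ?_, ?_, ?_, ?_, ?_⟩
  · intro j i i' h h'
    rw [mem] at h h'
    rcases h with h | ⟨rfl, rfl⟩ <;> rcases h' with h' | ⟨h1, h2⟩
    · exact hI.A j i i' h h'
    · subst h2; exact absurd h (hnb _)
    · exact absurd h' (hnb _)
    · exact h1.symm
  · intro i j h
    rw [mem] at h
    rcases h with h | ⟨rfl, rfl⟩
    · exact hI.B i j h
    · exact hab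
  · intro j h i
    have h1 : ∀ i, j ∉ s.J i := fun i hi => h i ((mem i j).2 (Or.inl hi))
    have h2 : j ≠ b := fun e => h a ((mem a j).2 (Or.inr ⟨rfl, e⟩))
    rw [hr]; simp only [h2, false_and, if_false]
    exact hI.C j h1 i
  · intro j i0 h i
    rw [mem] at h
    rcases h with h | ⟨rfl, rfl⟩
    · have h2 : j ≠ b := by rintro rfl; exact hnb _ h
      rw [hr]; simp only [h2, false_and, if_false]
      exact hI.D j i0 h i
    · rw [hr]; simp only [true_and]
      rw [hI.C j hnb i]
  · intro i
    by_cases h : i = a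
    · subst h
      rw [hJ]; dsimp only
      rw [if_pos rfl, Finset.sum_insert (hnb _)]
      have := job_le_MS phat hphat xhat b
      linarith
    · rw [hJ]; dsimp only
      rw [if_neg h]; exact hI.E i
  · intro i0 j i h hlt
    refine le_trans ?_ (hmono i)
    rw [mem] at h
    rcases h with h | ⟨rfl, rfl⟩
    · exact hI.G i0 j i h hlt
    · by_contra hc
      have hi : i ∈ sgI phat xhat γ s := by simpa [sgI] using hc
      exact absurd (hmin i hi (hlt.trans hab)) (not_le.2 hlt)
  · intro i j k hk hlt hj
    rw [mem] at hk
    rcases hk with hk | ⟨rfl, rfl⟩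
    · refine hI.F i j k hk hlt ?_
      rcases hj with hj | ⟨i0, hj, hl⟩
      · exact Or.inl fun i hi => hj i ((mem i j).2 (Or.inl hi))
      · rw [mem] at hj
        rcases hj with hj | ⟨rfl, rfl⟩
        · exact Or.inr ⟨i0, hj, hl⟩
        · exact Or.inl hnb
    · rcases hj with hj | ⟨i0, hj, hl⟩
      · obtain ⟨i', h1, h2⟩ := exists_T phat xhat γ s i j haI
          (fun i hi => hj i ((mem i j).2 (Or.inl hi))) hlt
        refine le_trans ?_ (hmax _ h1)
        exact div_le_div_of_nonneg_left (hphat _ _).le (hphat _ _) h2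
      · rw [mem] at hj
        rcases hj with hj | ⟨rfl, rfl⟩
        · exact absurd (hI.G i0 j i hj hl) (not_le.2 haS)
        · exact absurd hl (lt_irrefl _)

lemma inv_final [NeZero n] [NeZero m] (phat : Fin n → Fin m → ℝ) (xhat : Fin m → Fin n) (γ : ℝ)
    (hphat : ∀ i j, 0 < phat i j) (hM : 0 < MS phat xhat) (hγ : 0 < γ) (s : SGState n m)
    (h : Relation.ReflTransGen (SGStep phat xhat γ) (sgInit phat xhat) s) :
    SGInv phat xhat γ s := by
  induction h with
  | refl =>
    refine ⟨?_, ?_, ?_, ?_, ?_, ?_, ?_⟩ <;> simp [sgInit]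
    positivity
  | tail _ hs ih => exact inv_step phat xhat γ hphat _ _ ih hs

lemma sgAssign_min [NeZero n] (s : SGState n m) (xhat : Fin m → Fin n)
    (p : Fin n → Fin m → ℝ) (j : Fin m) (i : Fin n) :
    s.r (sgAssign s xhat p j) j * p (sgAssign s xhat p j) j ≤ s.r i j * p i j := by
  unfold sgAssign
  dsimp only
  split_ifs with h1 h2
  · exact h1 i
  · exact (Classical.choose_spec h2).2 i
  · have := Finset.min'_mem _ (exists_argmin fun i => s.r i j * p i j)
    rw [Finset.mem_filter] at this
    exact this.2 i

lemma mono_aux [NeZero n] (s : SGState n m) (xhat : Fin m → Fin n)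
    (hr : ∀ i j, 1 ≤ s.r i j) (i : Fin n) (p p' : Fin n → Fin m → ℝ)
    (h : ∀ i' j, i' ≠ i → p i' j = p' i' j) (j : Fin m)
    (h1 : sgAssign s xhat p j = i) (h2 : sgAssign s xhat p' j ≠ i) : p i j ≤ p' i j := by
  have e1 := sgAssign_min s xhat p j (sgAssign s xhat p' j)
  have e2 := sgAssign_min s xhat p' j i
  rw [h1, h _ _ h2] at e1
  exact le_of_mul_le_mul_left (e1.trans e2) (by linarith [hr i j])

/-- For any `γ ∈ (0, n/2 − 1)` and any `α`-approximate predicted schedule,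
`ScaledGreedy` is monotone (hence strategyproof), `(2+γ)α`-consistent, and
`(1 + 1/γ)n`-robust. -/
theorem sg_main [NeZero n] [NeZero m]
    (phat : Fin n → Fin m → ℝ) (xhat : Fin m → Fin n) (γ α : ℝ) (s : SGState n m)
    (hphat : ∀ i j, 0 < phat i j)
    (hγ0 : 0 < γ) (hγ1 : γ < (n : ℝ) / 2 - 1) (hα : 1 ≤ α)
    (hMS : MS phat xhat ≤ α * OPT phat) (hfinal : SGFinal phat xhat γ s) :
    MonotoneAlloc (sgAssign s xhat)
    ∧
    (∀ p : Fin n → Fin m → ℝ, (∀ i j, 0 < p i j) → phat = p →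
      MS p (sgAssign s xhat p) ≤ (2 + γ) * α * OPT p)
    ∧
    (∀ p : Fin n → Fin m → ℝ, (∀ i j, 0 < p i j) →
      MS p (sgAssign s xhat p) ≤ (1 + 1 / γ) * n * OPT p) := by
  have hM : 0 < MS phat xhat := lt_of_lt_of_le (hphat _ _) (job_le_MS phat hphat xhat 0)
  obtain ⟨hreach, hT⟩ := hfinal
  have hI := inv_final phat xhat γ hphat hM hγ0 s hreach
  have hr1 : ∀ i j, 1 ≤ s.r i j := by
    intro i j
    by_cases h : ∃ i0, j ∈ s.J i0
    · obtain ⟨i0, h⟩ := h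
      rw [hI.D j i0 h i]
      split_ifs
      · exact le_rfl
      · exact le_max_right _ _
    · push Not at h
      rw [hI.C j h i]
      exact le_max_right _ _
  refine ⟨?_, ?_, ?_⟩
  · intro i p p' _ _ h
    refine Finset.sum_nonpos fun j _ => ?_
    by_cases h1 : sgAssign s xhat p j = i <;> by_cases h2 : sgAssign s xhat p' j = i
    · simp [h1, h2]
    · have := mono_aux s xhat hr1 i p p' h j h1 h2
      simp only [h1, h2, if_true, if_false]; linarith
    · have := mono_aux s xhat hr1 i p' p (fun a b c => (h a b c).symm) j h2 h1
      simp only [h1, h2, if_true, if_false]; linarith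
    · simp [h1, h2]
  · rintro p - rfl
    have hU : ∀ j, (∀ i, j ∉ s.J i) → sgAssign s xhat phat j = xhat j := by
      intro j hj
      unfold sgAssign
      dsimp only
      rw [if_pos]
      intro i
      rw [hI.C j hj, hI.C j hj, div_self (hphat _ _).ne', max_self, one_mul]
      calc phat (xhat j) j = phat (xhat j) j / phat i j * phat i j := by
            rw [div_mul_cancel₀ _ (hphat i j).ne']
        _ ≤ _ := mul_le_mul_of_nonneg_right (le_max_left _ _) (hphat i j).le
    have hA : ∀ j i0, j ∈ s.J i0 → sgAssign s xhat phat j = i0 := by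
      intro j i0 hj
      have hv : ∀ i, s.r i0 j * phat i0 j ≤ s.r i j * phat i j := by
        intro i
        rw [hI.D j i0 hj i, hI.D j i0 hj i0, if_pos le_rfl, one_mul]
        split_ifs with h
        · rwa [one_mul]
        · calc phat i0 j ≤ phat (xhat j) j := (hI.B i0 j hj).le
            _ = phat (xhat j) j / phat i j * phat i j := by
              rw [div_mul_cancel₀ _ (hphat i j).ne']
            _ ≤ _ := mul_le_mul_of_nonneg_right (le_max_left _ _) (hphat i j).le
      have hx : ∃ i', j ∈ s.J i' ∧ ∀ i, s.r i' j * phat i' j ≤ s.r i j * phat i j := ⟨i0, hj, hv⟩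
      unfold sgAssign
      dsimp only
      rw [if_neg, dif_pos hx]
      · exact hI.A j _ _ (Classical.choose_spec hx).1 hj
      · intro hc
        have h1 := hc i0
        have hb := hI.B i0 j hj
        rw [hI.D j i0 hj i0, hI.D j i0 hj (xhat j), if_pos le_rfl, if_pos hb.le] at h1
        linarith
    have key : MS phat (sgAssign s xhat phat) ≤ (2 + γ) * MS phat xhat := by
      refine Finset.sup'_le _ _ fun i _ => ?_
      have hb : (∑ j, if sgAssign s xhat phat j = i then phat i j else 0)
          ≤ ∑ j, ((if j ∈ s.J i then phat i j else 0) + if xhat j = i then phat i j else 0) := by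
        refine Finset.sum_le_sum fun j _ => ?_
        have hp := hphat i j
        by_cases hj : ∃ i0, j ∈ s.J i0
        · obtain ⟨i0, hj⟩ := hj
          rw [hA j i0 hj]
          by_cases e : i0 = i
          · subst e
            rw [if_pos rfl, if_pos hj]
            split_ifs <;> linarith
          · rw [if_neg e]
            split_ifs <;> linarith
        · push Not at hj
          rw [hU j hj, if_neg (hj i), zero_add]
      rw [Finset.sum_add_distrib] at hb
      have h1 : (∑ j, if j ∈ s.J i then phat i j else 0) = ∑ j ∈ s.J i, phat i j := by
        simp
      have h2 := load_le_MS phat xhat i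
      have h3 := hI.E i
      rw [h1] at hb
      linarith
    calc _ ≤ _ := key
      _ ≤ (2 + γ) * (α * OPT phat) := mul_le_mul_of_nonneg_left hMS (by linarith)
      _ = _ := by ring
  · intro p hp
    -- the sum of maximal scalars
    have hRi : ∀ i, maxScalar s.r i ≤ 1 + (∑ k ∈ s.J i, phat (xhat k) k) / (γ * MS phat xhat) := by
      intro i
      have hnn : 0 ≤ (∑ k ∈ s.J i, phat (xhat k) k) / (γ * MS phat xhat) :=
        div_nonneg (Finset.sum_nonneg fun k _ => (hphat _ _).le) (by positivity)
      refine Finset.sup'_le _ _ fun j _ => ?_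
      by_cases h1 : s.r i j ≤ 1
      · linarith
      have hmx : s.r i j = max (phat (xhat j) j / phat i j) 1 ∧
          ((∀ i0, j ∉ s.J i0) ∨ ∃ i0, j ∈ s.J i0 ∧ phat i j < phat i0 j) := by
        by_cases hj : ∃ i0, j ∈ s.J i0
        · obtain ⟨i0, hj⟩ := hj
          have hd := hI.D j i0 hj i
          split_ifs at hd with hc
          · exact absurd hd.le h1
          · exact ⟨hd, Or.inr ⟨i0, hj, not_le.1 hc⟩⟩
        · push Not at hj
          exact ⟨hI.C j hj i, Or.inl hj⟩
      obtain ⟨hrm, hcase⟩ := hmx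
      have hgt : 1 < phat (xhat j) j / phat i j := by
        by_contra hc
        rw [max_eq_right (not_lt.1 hc)] at hrm
        exact h1 hrm.le
      rw [max_eq_left hgt.le] at hrm
      have hlt : phat i j < phat (xhat j) j := (one_lt_div (hphat i j)).1 hgt
      have hfull : γ * MS phat xhat ≤ ∑ k ∈ s.J i, phat i k := by
        rcases hcase with hj | ⟨i0, hj, hl⟩
        · by_contra hc
          have hi : i ∈ sgI phat xhat γ s := by simpa [sgI] using hc
          obtain ⟨i', h, _⟩ := exists_T phat xhat γ s i j hi hj hlt
          rw [hT] at h
          simp at h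
        · exact hI.G i0 j i hj hl
      have hsum : s.r i j * ∑ k ∈ s.J i, phat i k ≤ ∑ k ∈ s.J i, phat (xhat k) k := by
        rw [Finset.mul_sum]
        refine Finset.sum_le_sum fun k hk => ?_
        rw [hrm, ← le_div_iff₀ (hphat i k)]
        exact hI.F i j k hk hlt hcase
      have : s.r i j ≤ (∑ k ∈ s.J i, phat (xhat k) k) / (γ * MS phat xhat) := by
        rw [le_div_iff₀ (by positivity)]
        refine le_trans ?_ hsum
        exact mul_le_mul_of_nonneg_left hfull (by linarith [hr1 i j])
      linarith
    have hJs : ∑ i, ∑ k ∈ s.J i, phat (xhat k) k ≤ n * MS phat xhat := by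
      refine le_trans ?_ (total_le_MS phat xhat)
      rw [← Finset.sum_biUnion]
      · exact Finset.sum_le_sum_of_subset_of_nonneg (Finset.subset_univ _)
          (fun k _ _ => (hphat _ _).le)
      · intro i _ i' _ hne
        exact Finset.disjoint_left.2 fun k hk hk' => hne (hI.A k i i' hk hk')
    have hR : ∑ i, maxScalar s.r i ≤ (1 + 1 / γ) * n := by
      calc _ ≤ ∑ i, (1 + (∑ k ∈ s.J i, phat (xhat k) k) / (γ * MS phat xhat)) :=
            Finset.sum_le_sum fun i _ => hRi i
        _ = n + (∑ i, ∑ k ∈ s.J i, phat (xhat k) k) / (γ * MS phat xhat) := by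
            rw [Finset.sum_add_distrib, Finset.sum_div]; simp
        _ ≤ n + (n * MS phat xhat) / (γ * MS phat xhat) := by gcongr
        _ = _ := by field_simp
    obtain ⟨o, -, ho⟩ := Finset.exists_mem_eq_inf' (Finset.univ_nonempty (α := Fin m → Fin n))
      (fun a => MS p a)
    change OPT p = MS p o at ho
    have hO : 0 ≤ OPT p := by
      rw [ho]; exact (hp _ _).le.trans (job_le_MS p hp o 0)
    refine Finset.sup'_le _ _ fun i _ => ?_
    calc (∑ j, if sgAssign s xhat p j = i then p i j else 0)
        ≤ ∑ j, s.r (o j) j * p (o j) j := by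
          refine Finset.sum_le_sum fun j _ => ?_
          split_ifs with h
          · have := sgAssign_min s xhat p j (o j)
            rw [h] at this
            nlinarith [hr1 i j, hp i j]
          · exact mul_nonneg (by linarith [hr1 (o j) j]) (hp _ _).le
      _ ≤ ∑ j, maxScalar s.r (o j) * p (o j) j := by
          refine Finset.sum_le_sum fun j _ => ?_
          exact mul_le_mul_of_nonneg_right
            (Finset.le_sup' (fun k => s.r (o j) k) (Finset.mem_univ j)) (hp _ _).le
      _ = ∑ i, ∑ j, (if o j = i then maxScalar s.r i * p i j else 0) := by
          rw [Finset.sum_comm]; simp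
      _ = ∑ i, maxScalar s.r i * ∑ j, (if o j = i then p i j else 0) := by
          simp only [Finset.mul_sum, mul_ite, mul_zero]
      _ ≤ ∑ i, maxScalar s.r i * OPT p := by
          refine Finset.sum_le_sum fun i _ => mul_le_mul_of_nonneg_left ?_ ?_
          · rw [ho]; exact load_le_MS p o i
          · exact (zero_le_one.trans (hr1 i 0)).trans
              (Finset.le_sup' (fun k => s.r i k) (Finset.mem_univ 0))
      _ = (∑ i, maxScalar s.r i) * OPT p := by rw [Finset.sum_mul]
      _ ≤ _ := mul_le_mul_of_nonneg_right hR hO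
end
end
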